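/- arXiv:1502.03967 — 3 statements merged into one kernel-verified Lean document; each statement's English description precedes it below -/
import Mathlib

section
/- Let >₁ and >₂ be two control orders on the monomials of A = K[x₁,…,xₙ], with multiplicative sets S₁ := {1+g : g = 0 or lt₁(g) <₁ 1} and S₂ := {1+g : g = 0 or lt₂(g) <₂ 1}. Then (S₁⁻¹I)^c = (S₂⁻¹I)^c for every ideal I ⊆ A if and only if every variable has the same characteristic under >₁ and >₂, i.e., for each i, x_i <₁ 1 if and only if x_i <₂ 1. -/
open scoped Classical

noncomputable section

/-- A semigroup order on monomials: a strict total order on exponent vectors (written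
additively; the monomial `1` corresponds to `0`) compatible with multiplication. -/
def IsSemigroupOrder {σ : Type*} (lt : (σ →₀ ℕ) → (σ →₀ ℕ) → Prop) : Prop :=
  IsStrictTotalOrder (σ →₀ ℕ) lt ∧ ∀ a b c : σ →₀ ℕ, lt a b → lt (c + a) (c + b)

/-- The variable `i` is local for the order `lt`, i.e. `x_i < 1`. -/
def IsLocalVar {σ : Type*} (lt : (σ →₀ ℕ) → (σ →₀ ℕ) → Prop) (i : σ) : Prop :=
  lt (Finsupp.single i 1) 0

/-- A control order: a semigroup order under which every monomial divisible by a local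
variable is `< 1`. -/
def IsControlOrder {σ : Type*} (lt : (σ →₀ ℕ) → (σ →₀ ℕ) → Prop) : Prop :=
  IsSemigroupOrder lt ∧ ∀ m : σ →₀ ℕ, (∃ i, IsLocalVar lt i ∧ m i ≠ 0) → lt m 0

/-- `m` is the leading monomial of `g` w.r.t. `lt`. -/
def IsLeadingMonomial {K : Type*} [CommSemiring K] {σ : Type*}
    (lt : (σ →₀ ℕ) → (σ →₀ ℕ) → Prop) (g : MvPolynomial σ K) (m : σ →₀ ℕ) : Prop :=
  m ∈ g.support ∧ ∀ m' ∈ g.support, m' ≠ m → lt m' m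

/-- The multiplicative set `S = {1 + g : g = 0 or lt(g) < 1}`. -/
def SDen (K : Type*) [CommSemiring K] {σ : Type*}
    (lt : (σ →₀ ℕ) → (σ →₀ ℕ) → Prop) : Set (MvPolynomial σ K) :=
  {f | ∃ g : MvPolynomial σ K, f = 1 + g ∧
    (g = 0 ∨ ∃ m, IsLeadingMonomial lt g m ∧ lt m 0)}

/-- `I = ⋂ i ∈ s, Q i` is a minimal primary decomposition: every `Q i` is primary, the
radicals are pairwise distinct, and no component contains the intersection of the others. -/
def MinPrimDecOn {R : Type*} [CommRing R] {ι : Type*} (I : Ideal R) (Q : ι → Ideal R)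
    (s : Finset ι) : Prop :=
  I = ⨅ i ∈ s, Q i ∧ (∀ i ∈ s, (Q i).IsPrimary) ∧
    (∀ i ∈ s, ∀ j ∈ s, (Q i).radical = (Q j).radical → i = j) ∧
    ∀ i ∈ s, ¬ (⨅ j ∈ s.erase i, Q j) ≤ Q i

/-- The extraction determined by the decomposition `Q` (over `s`) and the ideal `J`:
the intersection of those components `Q i` with `Q i + J ≠ A` (which is `⊤` = the whole
ring when there are no such components). -/
def extractionFrom {R : Type*} [CommRing R] {ι : Type*} (J : Ideal R) (Q : ι → Ideal R)
    (s : Finset ι) : Ideal R :=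
  ⨅ i ∈ s.filter (fun i => Q i ⊔ J ≠ ⊤), Q i

/-- `B` is the extraction `β(I,J)` of `I` by `J`. -/
def IsExtraction {R : Type*} [CommRing R] (I J B : Ideal R) : Prop :=
  ∃ (k : ℕ) (Q : Fin k → Ideal R), MinPrimDecOn I Q Finset.univ ∧
    B = extractionFrom J Q Finset.univ

/-- `t ⊆ s` determines an isolated set of primes of the decomposition `Q` over `s`. -/
def IsIsolatedOn {R : Type*} [CommRing R] {ι : Type*} (Q : ι → Ideal R)
    (s t : Finset ι) : Prop :=
  t ⊆ s ∧ ∀ j ∈ s, (∃ i ∈ t, (Q j).radical ≤ (Q i).radical) → j ∈ t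

/-- The lifted ideal `W' = ⟨W, t₁ - g₁, …, t_s - g_s⟩ ⊆ A' = K[x₁,…,xₙ,t₁,…,t_s]`. -/
def liftIdeal {K : Type*} [CommRing K] {n s : ℕ} (g : Fin s → MvPolynomial (Fin n) K)
    (W : Ideal (MvPolynomial (Fin n) K)) : Ideal (MvPolynomial (Fin n ⊕ Fin s) K) :=
  W.map (MvPolynomial.rename (Sum.inl : Fin n → Fin n ⊕ Fin s)).toRingHom ⊔
    Ideal.span (Set.range fun w : Fin s =>
      (MvPolynomial.X (Sum.inr w) : MvPolynomial (Fin n ⊕ Fin s) K) -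
        MvPolynomial.rename (Sum.inl : Fin n → Fin n ⊕ Fin s) (g w))

/-- The substitution homomorphism `φ : A' → A`, fixing each `x_i` and sending `t_w ↦ g_w`. -/
def substHom {K : Type*} [CommRing K] {n s : ℕ} (g : Fin s → MvPolynomial (Fin n) K) :
    MvPolynomial (Fin n ⊕ Fin s) K →ₐ[K] MvPolynomial (Fin n) K :=
  MvPolynomial.aeval (Sum.elim MvPolynomial.X g)

theorem aux_max {α : Type*} (lt : α → α → Prop) (h : IsStrictTotalOrder α lt) (s : Finset α)
    (hs : s.Nonempty) : ∃ m ∈ s, ∀ m' ∈ s, m' ≠ m → lt m' m := by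
  letI : LinearOrder α := linearOrderOfSTO lt
  obtain ⟨m, hm, hmax⟩ := Finset.exists_max_image s id hs
  exact ⟨m, hm, fun m' hm' hne => lt_of_le_of_ne (hmax m' hm') hne⟩

theorem aux_lt_iff {σ : Type*} (lt : (σ →₀ ℕ) → (σ →₀ ℕ) → Prop) (h : IsControlOrder lt)
    (m : σ →₀ ℕ) : lt m 0 ↔ ∃ i, IsLocalVar lt i ∧ m i ≠ 0 := by
  refine ⟨fun hm => ?_, h.2 m⟩
  haveI := h.1.1
  by_contra! hcon
  have key : ∀ m : σ →₀ ℕ, (∀ i, IsLocalVar lt i → m i = 0) → ¬ lt m 0 := by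
    intro m
    induction m using Finsupp.induction_linear with
    | zero => exact fun _ => irrefl _
    | add f g hf hg =>
      intro hl hlt
      have hf' := hf fun i hi => by have := hl i hi; simp at this; exact this.1
      have hg' := hg fun i hi => by have := hl i hi; simp at this; exact this.2
      rcases trichotomous_of lt g 0 with h1 | h1 | h1
      · exact hg' h1
      · rw [h1, add_zero] at hlt; exact hf' hlt
      · have h2 := h.1.2 _ _ f h1
        rw [add_zero] at h2
        exact hf' (_root_.trans h2 hlt)
    | single i k =>
      intro hl
      induction k with
      | zero => simpa using irrefl _
      | succ k ih =>
        intro hlt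
        have hi : ¬ IsLocalVar lt i := fun hi => by simpa using hl i hi
        have hk : ¬ lt (Finsupp.single i k) 0 := ih fun j hj => by
          have : i ≠ j := fun e => hi (e ▸ hj)
          simp [Finsupp.single_apply, this]
        rw [Finsupp.single_add] at hlt
        rcases trichotomous_of lt (Finsupp.single i 1) 0 with h1 | h1 | h1
        · exact hi h1
        · simp at h1
        · have h2 := h.1.2 _ _ (Finsupp.single i k) h1
          rw [add_zero] at h2
          exact hk (_root_.trans h2 hlt)
  exact key m hcon hm

theorem aux_mem {K : Type*} [CommRing K] {σ : Type*} (lt : (σ →₀ ℕ) → (σ →₀ ℕ) → Prop)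
    (h : IsControlOrder lt) (f : MvPolynomial σ K) :
    f ∈ SDen K lt ↔ ∀ m ∈ (f - 1).support, ∃ i, IsLocalVar lt i ∧ m i ≠ 0 := by
  haveI := h.1.1
  simp only [← aux_lt_iff lt h]
  constructor
  · rintro ⟨g, rfl, hg⟩ m hm
    rw [add_sub_cancel_left] at hm
    rcases hg with rfl | ⟨m₀, ⟨_, hmax⟩, h0⟩
    · simp at hm
    · by_cases e : m = m₀
      · rwa [e]
      · exact _root_.trans (hmax m hm e) h0
  · intro hm
    refine ⟨f - 1, by ring, ?_⟩
    by_cases e : f - 1 = 0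
    · exact Or.inl e
    · obtain ⟨m, hm1, hm2⟩ := aux_max lt h.1.1 _ (MvPolynomial.support_nonempty.2 e)
      exact Or.inr ⟨m, ⟨hm1, hm2⟩, hm m hm1⟩

theorem aux_dir {K : Type*} [Field K] {n : ℕ}
    (lt₁ lt₂ : (Fin n →₀ ℕ) → (Fin n →₀ ℕ) → Prop)
    (h₁ : IsControlOrder lt₁) (h₂ : IsControlOrder lt₂)
    (S₁ S₂ : Submonoid (MvPolynomial (Fin n) K))
    (hS₁ : (S₁ : Set (MvPolynomial (Fin n) K)) = SDen K lt₁)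
    (hS₂ : (S₂ : Set (MvPolynomial (Fin n) K)) = SDen K lt₂)
    (H : ∀ I : Ideal (MvPolynomial (Fin n) K),
        (I.map (algebraMap (MvPolynomial (Fin n) K) (Localization S₁))).comap
            (algebraMap (MvPolynomial (Fin n) K) (Localization S₁)) =
          (I.map (algebraMap (MvPolynomial (Fin n) K) (Localization S₂))).comap
            (algebraMap (MvPolynomial (Fin n) K) (Localization S₂)))
    (i : Fin n) (hi : IsLocalVar lt₁ i) : IsLocalVar lt₂ i := by
  by_contra hn
  have hx : (1 + MvPolynomial.X i : MvPolynomial (Fin n) K) ∈ S₁ := by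
    rw [← SetLike.mem_coe, hS₁, aux_mem lt₁ h₁]
    intro m hm
    rw [add_sub_cancel_left, MvPolynomial.support_X, Finset.mem_singleton] at hm
    exact ⟨i, hi, by simp [hm]⟩
  have h1 := H (Ideal.span {1 + MvPolynomial.X i})
  have hm : (1 : MvPolynomial (Fin n) K) ∈ ((Ideal.span {1 + MvPolynomial.X i}).map
      (algebraMap (MvPolynomial (Fin n) K) (Localization S₁))).comap
            (algebraMap (MvPolynomial (Fin n) K) (Localization S₁)) := by
    rw [Ideal.mem_comap, IsLocalization.algebraMap_mem_map_algebraMap_iff S₁]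
    exact ⟨_, hx, by simpa using Ideal.mem_span_singleton_self _⟩
  rw [h1, Ideal.mem_comap, IsLocalization.algebraMap_mem_map_algebraMap_iff S₂] at hm
  obtain ⟨s, hs, hsI⟩ := hm
  rw [mul_one, Ideal.mem_span_singleton] at hsI
  obtain ⟨c, hc⟩ := hsI
  rw [← SetLike.mem_coe, hS₂, aux_mem lt₂ h₂] at hs
  let v : Fin n → K := fun j => if j = i then -1 else 0
  have e1 : MvPolynomial.eval v s = 0 := by
    rw [hc]; simp [v]
  have e2 : MvPolynomial.eval v (s - 1) = 0 := by
    rw [MvPolynomial.eval_eq]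
    refine Finset.sum_eq_zero fun m hm => ?_
    obtain ⟨j, hj, hmj⟩ := hs m hm
    have hji : j ≠ i := fun e => hn (e ▸ hj)
    refine mul_eq_zero_of_right _ (Finset.prod_eq_zero (i := j) (by simpa using hmj) ?_)
    simp [v, hji, hmj]
  rw [map_sub, e1] at e2
  simp at e2

/-- two control orders give the same contracted localization for all ideals
iff every variable has the same characteristic under both. -/
theorem stmt_2 {K : Type*} [Field K] {n : ℕ}
    (lt₁ lt₂ : (Fin n →₀ ℕ) → (Fin n →₀ ℕ) → Prop)
    (h₁ : IsControlOrder lt₁) (h₂ : IsControlOrder lt₂)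
    (S₁ S₂ : Submonoid (MvPolynomial (Fin n) K))
    (hS₁ : (S₁ : Set (MvPolynomial (Fin n) K)) = SDen K lt₁)
    (hS₂ : (S₂ : Set (MvPolynomial (Fin n) K)) = SDen K lt₂) :
    (∀ I : Ideal (MvPolynomial (Fin n) K),
        (I.map (algebraMap (MvPolynomial (Fin n) K) (Localization S₁))).comap
            (algebraMap (MvPolynomial (Fin n) K) (Localization S₁)) =
          (I.map (algebraMap (MvPolynomial (Fin n) K) (Localization S₂))).comap
            (algebraMap (MvPolynomial (Fin n) K) (Localization S₂))) ↔
      ∀ i : Fin n, (IsLocalVar lt₁ i ↔ IsLocalVar lt₂ i) := by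
  constructor
  · intro H i
    exact ⟨aux_dir lt₁ lt₂ h₁ h₂ S₁ S₂ hS₁ hS₂ H i,
      aux_dir lt₂ lt₁ h₂ h₁ S₂ S₁ hS₂ hS₁ (fun I => (H I).symm) i⟩
  · intro H I
    have : S₁ = S₂ := by
      apply SetLike.coe_injective
      rw [hS₁, hS₂]
      ext f
      rw [aux_mem lt₁ h₁, aux_mem lt₂ h₂]
      simp only [H]
    subst this
    rfl
end
end

section
/- Let > be a control order on the monomials of A' = K[x₁,…,xₙ,t₁,…,t_s] whose local variables are exactly t₁,…,t_s, with multiplicative set S' := {1+g : g = 0 or lt(g) < 1} ⊆ A'. Then β(I,J) equals the preimage of S'⁻¹I' under the composite map A ↪ A' → S'⁻¹A', and √β(I,J) equals the preimage of √(S'⁻¹I') under the same composite map. -/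
open scoped Classical

noncomputable section

theorem aux_global {σ : Type*} (lt : (σ →₀ ℕ) → (σ →₀ ℕ) → Prop)
    (h : IsSemigroupOrder lt) (m : σ →₀ ℕ) :
    (∀ i, m i ≠ 0 → ¬ IsLocalVar lt i) → m = 0 ∨ lt 0 m := by
  obtain ⟨hst, hadd⟩ := h
  have hsum : ∀ a b : σ →₀ ℕ, (a = 0 ∨ lt 0 a) → (b = 0 ∨ lt 0 b) → (a + b = 0 ∨ lt 0 (a + b)) := by
    rintro a b (rfl | ha) (rfl | hb)
    · left; simp
    · right; simpa using hb
    · right; simpa using ha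
    · right
      have := hadd 0 b a hb
      rw [add_zero] at this
      exact hst.toIsStrictOrder.toIsTrans.trans _ _ _ ha this
  induction m using Finsupp.induction_linear with
  | zero => intro _; left; rfl
  | add f g hf hg =>
    intro hm
    refine hsum _ _ (hf fun i hi => hm i ?_) (hg fun i hi => hm i ?_)
    · simp [hi]
    · simp [hi]
  | single a b =>
    intro hm
    by_cases hb : b = 0
    · left; simp [hb]
    have ha : ¬ IsLocalVar lt a := hm a (by simpa using hb)
    have h1 : Finsupp.single a 1 = 0 ∨ lt 0 (Finsupp.single a 1) := by
      rcases hst.toTrichotomous.rel_or_eq_or_rel_swap (a := Finsupp.single a 1) (b := 0) with h | h | h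
      · exact absurd h ha
      · exact Or.inl h
      · exact Or.inr h
    clear hm hb
    induction b with
    | zero => left; simp
    | succ b ih =>
      rw [Finsupp.single_add]
      exact hsum _ _ ih h1

theorem aux_exists_lead {K σ : Type*} [CommSemiring K] (lt : (σ →₀ ℕ) → (σ →₀ ℕ) → Prop)
    (h : IsSemigroupOrder lt) (s : Finset (σ →₀ ℕ)) (hs : s.Nonempty) :
    ∃ m ∈ s, ∀ m' ∈ s, m' ≠ m → lt m' m := by
  obtain ⟨hst, -⟩ := h
  induction hs using Finset.Nonempty.cons_induction with
  | singleton a => exact ⟨a, by simp⟩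
  | cons a s ha hs ih =>
    obtain ⟨m, hm, hmax⟩ := ih
    rcases hst.toTrichotomous.rel_or_eq_or_rel_swap (a := a) (b := m) with h | h | h
    · refine ⟨m, by simp [hm], fun m' hm' hne => ?_⟩
      rcases Finset.mem_cons.1 hm' with rfl | h'
      · exact h
      · exact hmax _ h' hne
    · exact absurd (h ▸ hm) ha
    · refine ⟨a, by simp, fun m' hm' hne => ?_⟩
      rcases Finset.mem_cons.1 hm' with rfl | h'
      · exact absurd rfl hne
      · by_cases e : m' = m
        · exact e ▸ h
        · exact hst.toIsStrictOrder.toIsTrans.trans _ _ _ (hmax _ h' e) h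

theorem aux_SDen {K : Type*} [Field K] {n s : ℕ}
    (lt : ((Fin n ⊕ Fin s) →₀ ℕ) → ((Fin n ⊕ Fin s) →₀ ℕ) → Prop)
    (hctrl : IsControlOrder lt)
    (hloc : ∀ v : Fin n ⊕ Fin s, IsLocalVar lt v ↔ ∃ w : Fin s, v = Sum.inr w)
    (g : MvPolynomial (Fin n ⊕ Fin s) K) :
    1 + g ∈ SDen K lt ↔ g ∈ Ideal.span (MvPolynomial.X '' {v : Fin n ⊕ Fin s | IsLocalVar lt v} :
      Set (MvPolynomial (Fin n ⊕ Fin s) K)) := by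
  have hst := hctrl.1.1
  rw [MvPolynomial.mem_ideal_span_X_image]
  constructor
  · rintro ⟨g', hg', h⟩ m hm
    obtain rfl : g = g' := add_left_cancel hg'
    rcases h with rfl | ⟨m0, ⟨h0, hmax⟩, hlt⟩
    · simp at hm
    have hm0 : lt m 0 := by
      by_cases e : m = m0
      · exact e ▸ hlt
      · exact hst.toIsStrictOrder.toIsTrans.trans _ _ _ (hmax m hm e) hlt
    by_contra hcon
    push Not at hcon
    have irr := hst.toIsStrictOrder.toIrrefl.irrefl
    rcases aux_global lt hctrl.1 m (fun i hi hl => hi (hcon i hl)) with rfl | h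
    · exact irr _ hm0
    · exact irr _ (hst.toIsStrictOrder.toIsTrans.trans _ _ _ h hm0)
  · intro h
    refine ⟨g, rfl, ?_⟩
    by_cases hg : g = 0
    · exact Or.inl hg
    right
    obtain ⟨m, hm, hmax⟩ := aux_exists_lead (K := K) lt hctrl.1 g.support
      (MvPolynomial.support_nonempty.2 hg)
    exact ⟨m, ⟨hm, hmax⟩, hctrl.2 m (h m hm)⟩

theorem aux_mem_lift {K : Type*} [Field K] {n s : ℕ} (g : Fin s → MvPolynomial (Fin n) K)
    (I : Ideal (MvPolynomial (Fin n) K)) (x : MvPolynomial (Fin n ⊕ Fin s) K) :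
    x ∈ liftIdeal g I ↔ substHom g x ∈ I := by
  have hφ : ∀ p, substHom g (MvPolynomial.rename Sum.inl p) = p := by
    intro p
    rw [substHom, MvPolynomial.aeval_rename, Sum.elim_comp_inl, MvPolynomial.aeval_X_left_apply]
  constructor
  · suffices h : liftIdeal g I ≤ I.comap (substHom g) from fun hx => h hx
    refine sup_le (Ideal.map_le_iff_le_comap.2 fun p hp => ?_) (Ideal.span_le.2 ?_)
    · simpa [Ideal.mem_comap, hφ] using hp
    · rintro _ ⟨w, rfl⟩
      have : substHom g (MvPolynomial.X (Sum.inr w) - MvPolynomial.rename Sum.inl (g w)) = 0 := by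
        rw [map_sub, hφ]; simp [substHom]
      simp only [SetLike.mem_coe, Ideal.mem_comap]
      rw [this]
      exact I.zero_mem
  · intro hx
    have key : x - MvPolynomial.rename Sum.inl (substHom g x) ∈ liftIdeal g I := by
      rw [← Ideal.Quotient.mk_eq_mk_iff_sub_mem]
      have : (Ideal.Quotient.mkₐ K (liftIdeal g I)) =
          (Ideal.Quotient.mkₐ K (liftIdeal g I)).comp
            ((MvPolynomial.rename Sum.inl).comp (substHom g)) := by
        apply MvPolynomial.algHom_ext
        rintro (i | w)
        · simp [substHom]
        · simp only [AlgHom.comp_apply, Ideal.Quotient.mkₐ_eq_mk]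
          rw [Ideal.Quotient.mk_eq_mk_iff_sub_mem]
          refine Ideal.mem_sup_right (Ideal.subset_span ⟨w, ?_⟩)
          simp [substHom]
      exact congrArg (fun f => f x) this
    have h2 : MvPolynomial.rename Sum.inl (substHom g x) ∈ liftIdeal g I :=
      Ideal.mem_sup_left (Ideal.mem_map_of_mem
        (MvPolynomial.rename (Sum.inl : Fin n → Fin n ⊕ Fin s)).toRingHom hx)
    simpa using add_mem key h2

theorem aux_extraction {R : Type*} [CommRing R] {k : ℕ} (I J : Ideal R) (Q : Fin k → Ideal R)
    (hQ : MinPrimDecOn I Q Finset.univ) (f : R) :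
    f ∈ extractionFrom J Q Finset.univ ↔ ∃ j ∈ J, (1 + j) * f ∈ I := by
  obtain ⟨hI, hprim, -, -⟩ := hQ
  have hI' : ∀ x, x ∈ I ↔ ∀ i, x ∈ Q i := by
    intro x; rw [hI]; simp [Ideal.mem_iInf]
  have hB : f ∈ extractionFrom J Q Finset.univ ↔ ∀ i, Q i ⊔ J ≠ ⊤ → f ∈ Q i := by
    simp [extractionFrom, Ideal.mem_iInf]
  rw [hB]
  constructor
  · intro h
    have h1 : ∀ i, ∃ u, u - 1 ∈ J ∧ u * f ∈ Q i := by
      intro i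
      by_cases hi : Q i ⊔ J = ⊤
      · obtain ⟨a, ha, b, hb, hab⟩ := Submodule.mem_sup.1 ((Ideal.eq_top_iff_one _).1 hi)
        refine ⟨a, ?_, Ideal.mul_mem_right _ _ ha⟩
        have : a - 1 = -b := by rw [← hab]; ring
        rw [this]; exact neg_mem hb
      · exact ⟨1, by simp, by simpa using h i hi⟩
    choose u hu huf using h1
    refine ⟨(∏ i, u i) - 1, ?_, ?_⟩
    · rw [← Ideal.Quotient.mk_eq_mk_iff_sub_mem, map_prod, map_one]
      refine Finset.prod_eq_one fun i _ => ?_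
      rw [← map_one (Ideal.Quotient.mk J), Ideal.Quotient.mk_eq_mk_iff_sub_mem]
      exact hu i
    · rw [hI']
      intro i
      rw [add_sub_cancel, ← Finset.mul_prod_erase _ _ (Finset.mem_univ i), mul_right_comm]
      exact Ideal.mul_mem_right _ _ (huf i)
  · rintro ⟨j, hj, hjf⟩ i hi
    have hm := (hI' _).1 hjf i
    rw [mul_comm] at hm
    rcases (Ideal.isPrimary_iff.1 (hprim i (Finset.mem_univ i))).2 hm with h | ⟨N, h⟩
    · exact h
    · exfalso
      apply hi
      rw [Ideal.eq_top_iff_one]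
      have h2 : (1 + j) ^ N - 1 ∈ J := by
        rw [← Ideal.Quotient.mk_eq_mk_iff_sub_mem]
        simp [Ideal.Quotient.eq_zero_iff_mem.2 hj]
      have := sub_mem (Ideal.mem_sup_left (T := J) h) (Ideal.mem_sup_right (S := Q i) h2)
      simpa using this

/-- for a control order on `A' = K[x,t]` with local variables exactly the
`t`'s, `β(I,J)` is the preimage of `S'⁻¹I'` under `A ↪ A' → S'⁻¹A'`, and `√β(I,J)` is the
preimage of `√(S'⁻¹I')` under the same map. -/
theorem stmt_8 {K : Type*} [Field K] {n s : ℕ}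
    (lt : ((Fin n ⊕ Fin s) →₀ ℕ) → ((Fin n ⊕ Fin s) →₀ ℕ) → Prop)
    (hctrl : IsControlOrder lt)
    (hloc : ∀ v : Fin n ⊕ Fin s, IsLocalVar lt v ↔ ∃ w : Fin s, v = Sum.inr w)
    (S' : Submonoid (MvPolynomial (Fin n ⊕ Fin s) K))
    (hS' : (S' : Set (MvPolynomial (Fin n ⊕ Fin s) K)) = SDen K lt)
    (I J : Ideal (MvPolynomial (Fin n) K)) (hI : I ≠ ⊤) (hJ : J ≠ ⊤)
    (g : Fin s → MvPolynomial (Fin n) K) (hJg : J = Ideal.span (Set.range g))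
    (k : ℕ) (Qd : Fin k → Ideal (MvPolynomial (Fin n) K))
    (hQd : MinPrimDecOn I Qd Finset.univ)
    (ρ : MvPolynomial (Fin n) K →+* Localization S')
    (hρ : ρ = (algebraMap (MvPolynomial (Fin n ⊕ Fin s) K) (Localization S')).comp
      (MvPolynomial.rename (Sum.inl : Fin n → Fin n ⊕ Fin s)).toRingHom) :
    extractionFrom J Qd Finset.univ =
        Ideal.comap ρ ((liftIdeal g I).map
          (algebraMap (MvPolynomial (Fin n ⊕ Fin s) K) (Localization S'))) ∧
      (extractionFrom J Qd Finset.univ).radical =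
        Ideal.comap ρ (((liftIdeal g I).map
          (algebraMap (MvPolynomial (Fin n ⊕ Fin s) K) (Localization S'))).radical) := by
  have main : extractionFrom J Qd Finset.univ =
        Ideal.comap ρ ((liftIdeal g I).map
          (algebraMap (MvPolynomial (Fin n ⊕ Fin s) K) (Localization S'))) := by
    ext f
    rw [aux_extraction I J Qd hQd, Ideal.mem_comap, hρ, RingHom.comp_apply,
      IsLocalization.algebraMap_mem_map_algebraMap_iff S']
    have hφ : ∀ p, substHom g (MvPolynomial.rename Sum.inl p) = p := by
      intro p
      rw [substHom, MvPolynomial.aeval_rename, Sum.elim_comp_inl, MvPolynomial.aeval_X_left_apply]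
    have hS : ∀ p, 1 + p ∈ S' ↔ p ∈ Ideal.span (MvPolynomial.X ''
        {v : Fin n ⊕ Fin s | IsLocalVar lt v} : Set (MvPolynomial (Fin n ⊕ Fin s) K)) := by
      intro p
      rw [← aux_SDen lt hctrl hloc, ← hS']
      rfl
    have himg : (Ideal.span (MvPolynomial.X '' {v : Fin n ⊕ Fin s | IsLocalVar lt v} :
        Set (MvPolynomial (Fin n ⊕ Fin s) K))).map (substHom g) = J := by
      rw [Ideal.map_span, hJg]
      congr 1
      ext p
      simp [hloc, substHom]
    have hsurj : Function.Surjective (substHom g) := fun p => ⟨_, hφ p⟩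
    constructor
    · rintro ⟨j, hj, hjf⟩
      rw [← himg, Ideal.mem_map_iff_of_surjective _ hsurj] at hj
      obtain ⟨p, hp, rfl⟩ := hj
      refine ⟨1 + p, (hS p).2 hp, ?_⟩
      rw [aux_mem_lift, map_mul, map_add, map_one]
      have := hφ f
      simp only [AlgHom.toRingHom_eq_coe, RingHom.coe_coe]
      rwa [this]
    · rintro ⟨u, hu, huf⟩
      obtain ⟨p, rfl⟩ : ∃ p, u = 1 + p := ⟨u - 1, by ring⟩
      refine ⟨substHom g p, ?_, ?_⟩
      · rw [← himg]
        exact Ideal.mem_map_of_mem _ ((hS p).1 hu)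
      · rw [aux_mem_lift, map_mul, map_add, map_one] at huf
        simp only [AlgHom.toRingHom_eq_coe, RingHom.coe_coe] at huf
        rwa [hφ f] at huf
  refine ⟨main, ?_⟩
  rw [Ideal.comap_radical, main]
end
end

section
/- Let I and J be ideals of A = K[x₁,…,xₙ] with I proper, and let I = Q₁ ∩ … ∩ Q_k be any primary decomposition of I (each Q_i primary, not necessarily minimal). Let E = {Q_i : Q_i + J ≠ A}. Then β(I,J) = ∩_{Q ∈ E} Q, where an empty intersection is interpreted as A. -/
open scoped Classical

noncomputable section

theorem mem_extractionFrom_iff {R : Type*} [CommRing R] {k : ℕ} (J : Ideal R)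
    (Q : Fin k → Ideal R) (hp : ∀ i, (Q i).IsPrimary) (f : R) :
    f ∈ extractionFrom J Q Finset.univ ↔ ∃ s : R, s - 1 ∈ J ∧ s * f ∈ ⨅ i, Q i := by
  simp only [extractionFrom, Finset.mem_filter, Finset.mem_univ, true_and, Ideal.mem_iInf]
  constructor
  · intro h
    have h1 : ∀ i, ∃ s : R, s - 1 ∈ J ∧ s * f ∈ Q i := by
      intro i
      by_cases hi : Q i ⊔ J = ⊤
      · obtain ⟨a, ha, b, hb, hab⟩ := Submodule.mem_sup.1 ((Ideal.eq_top_iff_one _).1 hi)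
        refine ⟨a, ?_, (Q i).mul_mem_right _ ha⟩
        have : a - 1 = -b := by rw [← hab]; ring
        rw [this]
        exact J.neg_mem hb
      · exact ⟨1, by simp, by simpa using h i hi⟩
    choose s hs hs' using h1
    refine ⟨∏ i, s i, ?_, fun i => ?_⟩
    · rw [← Ideal.Quotient.mk_eq_mk_iff_sub_mem, map_prod, map_one]
      refine Finset.prod_eq_one fun i _ => ?_
      rw [← map_one (Ideal.Quotient.mk J)]
      exact (Ideal.Quotient.mk_eq_mk_iff_sub_mem _ _).2 (hs i)
    · rw [← Finset.mul_prod_erase _ _ (Finset.mem_univ i),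
        mul_comm (s i), mul_assoc]
      exact (Q i).mul_mem_left _ (hs' i)
  · rintro ⟨s, hs, h⟩ i hi
    have h2 := h i
    rw [mul_comm] at h2
    rcases (Ideal.isPrimary_iff.1 (hp i)).2 h2 with h3 | ⟨m, hm⟩
    · exact h3
    · exfalso
      apply hi
      rw [Ideal.eq_top_iff_one]
      have h4 : s ^ m - 1 ∈ J := by
        rw [← Ideal.Quotient.mk_eq_mk_iff_sub_mem] at hs ⊢
        rw [map_pow, hs, map_one, one_pow]
      have : (1 : R) = s ^ m + -(s ^ m - 1) := by ring
      rw [this]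
      exact Submodule.add_mem_sup hm (J.neg_mem h4)

/-- for any (not necessarily minimal) primary decomposition `I = ⋂ Q i`,
the extraction `β(I,J)` equals the intersection of those `Q i` with `Q i + J ≠ A`. -/
theorem stmt_12 {K : Type*} [Field K] {n : ℕ}
    (I J : Ideal (MvPolynomial (Fin n) K)) (hI : I ≠ ⊤)
    (k : ℕ) (Q : Fin k → Ideal (MvPolynomial (Fin n) K))
    (hdec : I = ⨅ i, Q i) (hprim : ∀ i, (Q i).IsPrimary)
    (l : ℕ) (M : Fin l → Ideal (MvPolynomial (Fin n) K))
    (hM : MinPrimDecOn I M Finset.univ) :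
    extractionFrom J M Finset.univ = extractionFrom J Q Finset.univ := by
  ext f
  obtain ⟨h1, h2, -, -⟩ := hM
  rw [mem_extractionFrom_iff J M (fun i => h2 i (Finset.mem_univ i)),
    mem_extractionFrom_iff J Q hprim, ← hdec]
  simp only [Finset.mem_univ, iInf_pos] at h1
  rw [← h1]
end
end
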